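/- arXiv:1903.11823 — 3 statements merged into one kernel-verified Lean document; each statement's English description precedes it below -/
import Mathlib

section
/- Let x be an element of the second exterior power ⋀²(ℂ⁴) of ℂ⁴ (i.e., a ℂ-linear combination of wedge products v∧w of vectors v, w ∈ ℂ⁴). Then x ∧ x = 0 in the exterior algebra if and only if x is decomposable, i.e., there exist vectors v, w ∈ ℂ⁴ with x = v∧w. (This is the identification, used in the paper, of null 2-vectors in Λ²ℂ⁴ with complex 2-planes in ℂ⁴.) -/
/-- The inclusion of `ℂ⁴` into its exterior algebra. -/
noncomputable def ι4 : (Fin 4 → ℂ) →ₗ[ℂ] ExteriorAlgebra ℂ (Fin 4 → ℂ) :=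
  ExteriorAlgebra.ι ℂ

/-!
A covector `d` acts on the exterior algebra by contraction, an antiderivation `i_d` of degree `-1`.
If `x` is a 2-vector, then `u = i_d x` is a vector, and `x ∧ x = 0` gives
`0 = i_d (x ∧ x) = 2 u ∧ x`. Contracting `u ∧ x = 0` with a covector `e` such that `e u = 1` gives
`x = u ∧ i_e x`. By Euler's identity `∑ k, b k ∧ i_{b k*} x = 2 x`, where the `b k*` are the
coordinates of a basis `b`, some `d` makes `u` nonzero unless `x = 0`.
-/

section CliffordAlgebra

open CliffordAlgebra

variable {R M : Type*} [CommRing R] [AddCommGroup M] [Module R M] {Q : QuadraticForm R M}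

theorem contractLeft_mul (d : Module.Dual R M) (x y : CliffordAlgebra Q) :
    contractLeft d (x * y) = contractLeft d x * y + involute x * contractLeft d y := by
  induction x using left_induction with
  | algebraMap r =>
    rw [contractLeft_algebraMap_mul, contractLeft_algebraMap, AlgHom.commutes, zero_mul, zero_add]
  | add x₁ x₂ ih₁ ih₂ => rw [add_mul, map_add, map_add, map_add, ih₁, ih₂]; noncomm_ring
  | ι_mul x v ih =>
    rw [mul_assoc, contractLeft_ι_mul, contractLeft_ι_mul, ih, map_mul, involute_ι, sub_mul,
      smul_mul_assoc]
    noncomm_ring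

theorem eq_ι_mul_contractLeft_of_ι_mul_eq_zero {d : Module.Dual R M} {u : M}
    {x : CliffordAlgebra Q} (hd : d u = 1) (hux : ι Q u * x = 0) :
    x = ι Q u * contractLeft d x := by
  have h := contractLeft_ι_mul (d := d) u x
  rw [hux, map_zero, hd, one_smul] at h
  exact sub_eq_zero.mp h.symm

end CliffordAlgebra

section ExteriorAlgebra

open CliffordAlgebra hiding ι
open ExteriorAlgebra Filter

section CommRing

variable {R M : Type*} [CommRing R] [AddCommGroup M] [Module R M]

theorem ι_mul_eq_involute_mul_ι (v : M) (x : ExteriorAlgebra R M) :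
    ι R v * x = involute x * ι R v := by
  induction x using ExteriorAlgebra.induction with
  | algebraMap r => rw [AlgHom.commutes, Algebra.commutes]
  | ι w =>
    rw [involute_ι, neg_mul]
    exact eq_neg_of_add_eq_zero_left (ι_add_mul_swap v w)
  | mul x y hx hy => rw [← mul_assoc, hx, mul_assoc, hy, map_mul, mul_assoc]
  | add x y hx hy => rw [mul_add, hx, hy, map_add, add_mul]

theorem involute_eq_self_of_mem_exteriorPower {n : ℕ} (hn : Even n) {x : ExteriorAlgebra R M}
    (hx : x ∈ ⋀[R]^n M) : involute x = x :=
  involute_eq_of_mem_even <|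
    Submodule.mem_iSup_of_mem ⟨n, ZMod.natCast_eq_zero_iff_even.mpr hn⟩ hx

theorem commute_of_mem_exteriorPower {n : ℕ} (hn : Even n) {x : ExteriorAlgebra R M}
    (hx : x ∈ ⋀[R]^n M) (y : ExteriorAlgebra R M) : Commute y x := by
  induction y using ExteriorAlgebra.induction with
  | algebraMap r => exact Algebra.commutes r x
  | ι v =>
    rw [commute_iff_eq, ι_mul_eq_involute_mul_ι, involute_eq_self_of_mem_exteriorPower hn hx]
  | mul y z hy hz => exact hy.mul_left hz
  | add y z hy hz => exact hy.add_left hz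

theorem contractLeft_mul_self (d : Module.Dual R M) {n : ℕ} (hn : Even n)
    {x : ExteriorAlgebra R M} (hx : x ∈ ⋀[R]^n M) :
    contractLeft d (x * x) = (2 : R) • (contractLeft d x * x) := by
  rw [contractLeft_mul, involute_eq_self_of_mem_exteriorPower hn hx,
    ← (commute_of_mem_exteriorPower hn hx _).eq, two_smul]

theorem contractLeft_mem_exteriorPower (d : Module.Dual R M) {n : ℕ} {x : ExteriorAlgebra R M}
    (hx : x ∈ ⋀[R]^(n + 1) M) : contractLeft d x ∈ ⋀[R]^n M := by
  induction n generalizing x with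
  | zero =>
    obtain ⟨v, rfl⟩ := (pow_one (LinearMap.range (ι R (M := M)))).le hx
    rw [contractLeft_ι]
    exact Submodule.algebraMap_mem _
  | succ n ih =>
    rw [exteriorPower, pow_succ'] at hx
    refine Submodule.mul_induction_on hx ?_ fun y z hy hz => ?_
    · rintro _ ⟨v, rfl⟩ y hy
      rw [contractLeft_ι_mul]
      refine sub_mem (Submodule.smul_mem _ _ hy) ?_
      rw [exteriorPower, pow_succ']
      exact Submodule.mul_mem_mul (LinearMap.mem_range_self _ v) (ih hy)
    · rw [map_add]
      exact add_mem hy hz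

theorem exists_ι_eq_contractLeft (d : Module.Dual R M) {x : ExteriorAlgebra R M}
    (hx : x ∈ ⋀[R]^2 M) : ∃ u, ι R u = contractLeft d x :=
  (pow_one (LinearMap.range (ι R (M := M)))).le (contractLeft_mem_exteriorPower d hx)

theorem ι_mul_ι_mem_exteriorPower (v w : M) : ι R v * ι R w ∈ ⋀[R]^2 M := by
  rw [exteriorPower, pow_two]
  exact Submodule.mul_mem_mul (LinearMap.mem_range_self _ v) (LinearMap.mem_range_self _ w)

theorem ι_mul_ι_mul_self (v w : M) : ι R v * ι R w * (ι R v * ι R w) = 0 := by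
  rw [mul_assoc, ι_mul_eq_involute_mul_ι w, map_mul, involute_ι, involute_ι, neg_mul_neg,
    mul_assoc, ι_sq_zero, mul_zero, mul_zero]

theorem ι_mul_contractLeft_ι_mul (d : Module.Dual R M) (a v : M) (x : ExteriorAlgebra R M) :
    ι R a * contractLeft d (ι R v * x) =
      ι R (d v • a) * x + ι R v * (ι R a * contractLeft d x) := by
  have hswap : ι R a * ι R v = -(ι R v * ι R a) :=
    eq_neg_of_add_eq_zero_left (ι_add_mul_swap a v)
  rw [contractLeft_ι_mul, mul_sub, mul_smul_comm, ← mul_assoc, hswap, neg_mul, sub_neg_eq_add,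
    mul_assoc, map_smul, smul_mul_assoc]

theorem eventually_sum_ι_mul_contractLeft_coord {I : Type*} (b : Module.Basis I R M) {n : ℕ}
    {x : ExteriorAlgebra R M} (hx : x ∈ ⋀[R]^n M) :
    ∀ᶠ s : Finset I in atTop, ∑ i ∈ s, ι R (b i) * contractLeft (b.coord i) x = n • x := by
  induction hx using Submodule.pow_induction_on_left' with
  | algebraMap r => simp
  | add x y n _ _ hx hy =>
    filter_upwards [hx, hy] with s hx hy
    simp only [map_add, mul_add, Finset.sum_add_distrib, hx, hy, smul_add]
  | mem_mul v hv n x _ ih =>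
    obtain ⟨v, rfl⟩ := hv
    filter_upwards [ih, eventually_ge_atTop (b.repr v).support] with s ih hs
    have hv : ∑ i ∈ s, b.coord i v • b i = v := by
      simp only [Module.Basis.coord_apply]
      rw [← Finsupp.sum_of_support_subset (b.repr v) hs (fun i r => r • b i)
        fun i _ => zero_smul R (b i)]
      exact b.linearCombination_repr v
    calc ∑ i ∈ s, ι R (b i) * contractLeft (b.coord i) (ι R v * x)
        = ∑ i ∈ s,
            (ι R (b.coord i v • b i) * x + ι R v * (ι R (b i) * contractLeft (b.coord i) x)) := by
          simp only [ι_mul_contractLeft_ι_mul]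
      _ = ι R v * x + ι R v * (n • x) := by
          rw [Finset.sum_add_distrib, ← Finset.sum_mul, ← map_sum, hv, ← Finset.mul_sum, ih]
      _ = (n + 1) • (ι R v * x) := by rw [mul_smul_comm, succ_nsmul']

theorem nsmul_eq_zero_of_forall_contractLeft_eq_zero [Module.Free R M] {n : ℕ}
    {x : ExteriorAlgebra R M} (hx : x ∈ ⋀[R]^n M)
    (hd : ∀ d : Module.Dual R M, contractLeft d x = 0) : n • x = 0 := by
  obtain ⟨s, hs⟩ :=
    (eventually_sum_ι_mul_contractLeft_coord (Module.Free.chooseBasis R M) hx).exists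
  rw [← hs]
  exact Finset.sum_eq_zero fun i _ => by rw [hd, mul_zero]

end CommRing

section Field

variable {K V : Type*} [Field K] [AddCommGroup V] [Module K V]

theorem exists_contractLeft_ne_zero {n : ℕ} (hn : (n : K) ≠ 0) {x : ExteriorAlgebra K V}
    (hx : x ∈ ⋀[K]^n V) (hx₀ : x ≠ 0) : ∃ d : Module.Dual K V, contractLeft d x ≠ 0 := by
  by_contra! hd
  have hnx := nsmul_eq_zero_of_forall_contractLeft_eq_zero hx hd
  rw [← Nat.cast_smul_eq_nsmul K] at hnx
  exact smul_ne_zero hn hx₀ hnx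

theorem wedge_square_zero_iff_decomposable_general [NeZero (2 : K)] {x : ExteriorAlgebra K V}
    (hx : x ∈ ⋀[K]^2 V) : x * x = 0 ↔ ∃ v w : V, x = ι K v * ι K w := by
  refine ⟨fun hxx => ?_, fun ⟨v, w, hvw⟩ => hvw ▸ ι_mul_ι_mul_self v w⟩
  obtain rfl | hx₀ := eq_or_ne x 0
  · exact ⟨0, 0, by rw [map_zero, zero_mul]⟩
  obtain ⟨d, hdx⟩ := exists_contractLeft_ne_zero (n := 2) (mod_cast two_ne_zero) hx hx₀
  obtain ⟨u, hu⟩ := exists_ι_eq_contractLeft d hx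
  have hu₀ : u ≠ 0 := by rintro rfl; exact hdx (hu ▸ map_zero _)
  have hux : ι K u * x = 0 := by
    have h := contractLeft_mul_self d even_two hx
    rw [hxx, map_zero, ← hu] at h
    exact (smul_eq_zero.mp h.symm).resolve_left two_ne_zero
  obtain ⟨e, he⟩ := Module.Projective.exists_dual_eq_one K hu₀
  obtain ⟨w, hw⟩ := exists_ι_eq_contractLeft e hx
  exact ⟨u, w, hw ▸ eq_ι_mul_contractLeft_of_ι_mul_eq_zero he hux⟩

end Field

end ExteriorAlgebra

/-- A 2-vector `x ∈ ⋀²ℂ⁴` (an element of the span of wedge products `v∧w`) satisfies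
`x ∧ x = 0` if and only if it is decomposable, i.e. `x = v∧w` for some `v, w ∈ ℂ⁴`. -/
theorem wedge_square_zero_iff_decomposable
    (x : ExteriorAlgebra ℂ (Fin 4 → ℂ))
    (hx : x ∈ Submodule.span ℂ
      {z : ExteriorAlgebra ℂ (Fin 4 → ℂ) | ∃ v w : Fin 4 → ℂ, z = ι4 v * ι4 w}) :
    x * x = 0 ↔ ∃ v w : Fin 4 → ℂ, x = ι4 v * ι4 w := by
  refine wedge_square_zero_iff_decomposable_general (Submodule.span_le.mpr ?_ hx)
  exact fun _ ⟨v, w, hvw⟩ => hvw ▸ ι_mul_ι_mem_exteriorPower v w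
end

section
/- Let A be a 4×4 complex matrix, acting on 2-vectors of ℂ⁴ by the derivation rule A·(v∧w) = (A v)∧w + v∧(A w). Then A·(e₁∧e₂) = 0 and A·(e₃∧e₄) = 0 hold simultaneously if and only if A is block diagonal with traceless 2×2 blocks; explicitly, if and only if A i j = 0 whenever exactly one of the indices i, j lies in {1,2} (i.e., the off-diagonal 2×2 blocks vanish) and A₁₁ + A₂₂ = 0 and A₃₃ + A₄₄ = 0. -/
/-- The standard basis of `ℂ⁴`. -/
def e (i : Fin 4) : Fin 4 → ℂ := Pi.single i 1

/-- The derivation action of a matrix `A` on the 2-vector `v∧w`: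
`A·(v∧w) = (Av)∧w + v∧(Aw)`. -/
noncomputable def derAct (A : Matrix (Fin 4) (Fin 4) ℂ) (v w : Fin 4 → ℂ) :
    ExteriorAlgebra ℂ (Fin 4 → ℂ) :=
  ι4 (A.mulVec v) * ι4 w + ι4 v * ι4 (A.mulVec w)

/-!
Contracting `x ∧ y` with a linear form `φ` gives the vector `φ x • y - φ y • x`. Hence contracting
the relation `x ∧ b l + b k ∧ y = 0` with the coordinate forms of a basis `b` turns it into a
family of vector equations, whose coordinates say that `x` and `y` lie in the plane spanned by
`b k` and `b l` and that the `k`-th coordinate of `x` cancels the `l`-th coordinate of `y`. With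
`x = f (b k)` and `y = f (b l)`, this says that `f` preserves the plane and has trace zero on it.
-/

open Module

section CommRing

variable {R M κ : Type*} [CommRing R] [AddCommGroup M] [Module R M]

theorem contractLeft_ι_mul_ι {Q : QuadraticForm R M} (φ : Dual R M) (v w : M) :
    CliffordAlgebra.contractLeft φ (CliffordAlgebra.ι Q v * CliffordAlgebra.ι Q w) =
      CliffordAlgebra.ι Q (φ v • w - φ w • v) := by
  rw [CliffordAlgebra.contractLeft_ι_mul, CliffordAlgebra.contractLeft_ι, map_sub, map_smul,
    map_smul, ← Algebra.commutes, ← Algebra.smul_def]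

theorem contract_add_contract_eq_zero {v w v' w' : M}
    (h : ExteriorAlgebra.ι R v * ExteriorAlgebra.ι R w +
      ExteriorAlgebra.ι R v' * ExteriorAlgebra.ι R w' = 0) (φ : Dual R M) :
    (φ v • w - φ w • v) + (φ v' • w' - φ w' • v') = 0 := by
  rw [← ExteriorAlgebra.ι_eq_zero_iff (R := R), map_add, ← contractLeft_ι_mul_ι,
    ← contractLeft_ι_mul_ι, ← map_add, h, map_zero]

theorem eq_coord_smul_add_coord_smul (b : Basis κ R M) {k l : κ} (hkl : k ≠ l) {v : M}
    (hv : ∀ i, i ≠ k → i ≠ l → b.coord i v = 0) :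
    v = b.coord k v • b k + b.coord l v • b l := by
  classical
  refine b.ext_elem fun i => ?_
  rcases eq_or_ne i k with rfl | hik
  · simp [hkl]
  rcases eq_or_ne i l with rfl | hil
  · simp [hkl.symm]
  · simpa [hik, hil, hik.symm, hil.symm] using hv i hik hil

theorem wedge_add_wedge_eq_zero_iff (b : Basis κ R M) {k l : κ} (hkl : k ≠ l) (x y : M) :
    ExteriorAlgebra.ι R x * ExteriorAlgebra.ι R (b l) +
        ExteriorAlgebra.ι R (b k) * ExteriorAlgebra.ι R y = 0 ↔
      (∀ i, i ≠ k → i ≠ l → b.coord i x = 0 ∧ b.coord i y = 0) ∧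
        b.coord k x + b.coord l y = 0 := by
  classical
  constructor
  · intro h
    have contract (i j : κ) :=
      congrArg (b.coord j) (contract_add_contract_eq_zero h (b.coord i))
    refine ⟨fun i hik hil => ⟨?_, ?_⟩, ?_⟩
    · simpa [hkl, hik.symm, hil.symm] using contract i l
    · simpa [hkl.symm, hik.symm, hil.symm] using contract i k
    · simpa [hkl, hkl.symm] using contract k l
  · rintro ⟨h, trace_eq_zero⟩
    have hx := eq_coord_smul_add_coord_smul b hkl fun i hik hil => (h i hik hil).1
    have hy := eq_coord_smul_add_coord_smul b hkl fun i hik hil => (h i hik hil).2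
    have x_wedge : ExteriorAlgebra.ι R x * ExteriorAlgebra.ι R (b l) =
        b.coord k x • (ExteriorAlgebra.ι R (b k) * ExteriorAlgebra.ι R (b l)) := by
      conv_lhs => rw [hx]
      simp [add_mul]
    have wedge_y : ExteriorAlgebra.ι R (b k) * ExteriorAlgebra.ι R y =
        b.coord l y • (ExteriorAlgebra.ι R (b k) * ExteriorAlgebra.ι R (b l)) := by
      conv_lhs => rw [hy]
      simp [mul_add]
    rw [x_wedge, wedge_y, ← add_smul, trace_eq_zero, zero_smul]

/-- The action `f·(v∧w) = (f v)∧w + v∧(f w)` of an endomorphism `f` of a module on 2-vectors, as a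
function of the factors `v` and `w`. -/
noncomputable def wedgeDeriv (f : End R M) (v w : M) : ExteriorAlgebra R M :=
  ExteriorAlgebra.ι R (f v) * ExteriorAlgebra.ι R w +
    ExteriorAlgebra.ι R v * ExteriorAlgebra.ι R (f w)

theorem derAct_annihilates_iff_blockDiag_traceless_general (b : Basis (κ × Fin 2) R M)
    (f : End R M) :
    (∀ i, wedgeDeriv f (b (i, 0)) (b (i, 1)) = 0) ↔
      (∀ i j, i ≠ j → ∀ r s, b.coord (i, r) (f (b (j, s))) = 0) ∧
        ∀ i, b.coord (i, 0) (f (b (i, 0))) + b.coord (i, 1) (f (b (i, 1))) = 0 := by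
  have plane (j : κ) := wedge_add_wedge_eq_zero_iff b (k := (j, 0)) (l := (j, 1)) (by simp)
    (f (b (j, 0))) (f (b (j, 1)))
  constructor
  · intro h
    refine ⟨fun i j hij r s => ?_, fun j => ((plane j).1 (h j)).2⟩
    have off_plane := ((plane j).1 (h j)).1 (i, r) (by simp [hij]) (by simp [hij])
    fin_cases s
    exacts [off_plane.1, off_plane.2]
  · rintro ⟨off_diag, trace_eq_zero⟩ j
    refine (plane j).2 ⟨fun ⟨i, r⟩ h0 h1 => ?_, trace_eq_zero j⟩
    have hij : i ≠ j := by
      rintro rfl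
      fin_cases r
      exacts [h0 rfl, h1 rfl]
    exact ⟨off_diag i j hij r 0, off_diag i j hij r 1⟩

end CommRing

/-- The position of an index of `ℂ⁴` with respect to the decomposition into two planes: the pair
`(i, r)` stands for the `r`-th index `2 * i + r` of the `i`-th plane. -/
def blockIndex : Fin 2 × Fin 2 ≃ Fin 4 := finProdFinEquiv

/-- The standard basis of `ℂ⁴` arranged by planes, so that the wedges `e₁∧e₂` and `e₃∧e₄` are
those of the pairs `planeBasis (i, 0)`, `planeBasis (i, 1)`. -/
noncomputable def planeBasis : Basis (Fin 2 × Fin 2) ℂ (Fin 4 → ℂ) :=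
  (Pi.basisFun ℂ (Fin 4)).reindex blockIndex.symm

theorem planeBasis_apply (p : Fin 2 × Fin 2) : planeBasis p = e (blockIndex p) := by
  simp [planeBasis, e]

theorem planeBasis_coord_mulVecLin (A : Matrix (Fin 4) (Fin 4) ℂ) (p q : Fin 2 × Fin 2) :
    planeBasis.coord p (A.mulVecLin (planeBasis q)) = A (blockIndex p) (blockIndex q) := by
  rw [planeBasis_apply]
  simp [planeBasis, e]

theorem wedgeDeriv_mulVecLin (A : Matrix (Fin 4) (Fin 4) ℂ) (v w : Fin 4 → ℂ) :
    wedgeDeriv A.mulVecLin v w = derAct A v w :=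
  rfl

theorem forall_offDiag_iff_forall_block_ne (P : Fin 4 → Fin 4 → Prop) :
    (∀ i j : Fin 4, ((i.val < 2 ∧ 2 ≤ j.val) ∨ (2 ≤ i.val ∧ j.val < 2)) → P i j) ↔
      ∀ i j : Fin 2, i ≠ j → ∀ r s : Fin 2, P (blockIndex (i, r)) (blockIndex (j, s)) := by
  have block_ne_iff : ∀ i j r s : Fin 2,
      (((blockIndex (i, r)).val < 2 ∧ 2 ≤ (blockIndex (j, s)).val) ∨
        (2 ≤ (blockIndex (i, r)).val ∧ (blockIndex (j, s)).val < 2)) ↔ i ≠ j := by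
    decide
  constructor
  · exact fun h i j hij r s => h _ _ ((block_ne_iff i j r s).2 hij)
  · intro h i j hij
    obtain ⟨⟨i, r⟩, rfl⟩ := blockIndex.surjective i
    obtain ⟨⟨j, s⟩, rfl⟩ := blockIndex.surjective j
    exact h i j ((block_ne_iff i j r s).1 hij) r s

/-- `A·(e₁∧e₂) = 0` and `A·(e₃∧e₄) = 0` hold simultaneously if and only if `A` is
block diagonal (the entries `A i j` with exactly one of `i, j` among the first two
indices vanish) with traceless 2×2 diagonal blocks. -/
theorem derAct_annihilates_iff_blockDiag_traceless (A : Matrix (Fin 4) (Fin 4) ℂ) :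
    (derAct A (e 0) (e 1) = 0 ∧ derAct A (e 2) (e 3) = 0) ↔
      ((∀ i j : Fin 4, ((i.val < 2 ∧ 2 ≤ j.val) ∨ (2 ≤ i.val ∧ j.val < 2)) → A i j = 0) ∧
        A 0 0 + A 1 1 = 0 ∧ A 2 2 + A 3 3 = 0) := by
  calc
    _ ↔ ∀ i, derAct A (planeBasis (i, 0)) (planeBasis (i, 1)) = 0 := by
      rw [Fin.forall_fin_two]
      simp only [planeBasis_apply]
      rfl
    _ ↔ (∀ i j : Fin 2, i ≠ j → ∀ r s : Fin 2,
          A (blockIndex (i, r)) (blockIndex (j, s)) = 0) ∧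
        ∀ i : Fin 2, A (blockIndex (i, 0)) (blockIndex (i, 0)) +
          A (blockIndex (i, 1)) (blockIndex (i, 1)) = 0 := by
      simpa only [planeBasis_coord_mulVecLin, wedgeDeriv_mulVecLin] using
        derAct_annihilates_iff_blockDiag_traceless_general planeBasis A.mulVecLin
    _ ↔ _ := and_congr (forall_offDiag_iff_forall_block_ne (A · · = 0)).symm Fin.forall_fin_two
end

section
/- Let g be a 4×4 complex matrix. Then g commutes with the quaternionic structure j and its induced action Λ²g on 2-vectors satisfies (g e₁)∧(g e₂) = e₁∧e₂, (g e₃)∧(g e₄) = e₃∧e₄, and (g e₁)∧(g e₃) − (g e₂)∧(g e₄) = e₁∧e₃ − e₂∧e₄, if and only if there exist a, b ∈ ℂ with a·conj a − b·conj b = 1 such that g = [[a, b, 0, 0], [conj b, conj a, 0, 0], [0, 0, conj a, conj b], [0, 0, b, a]]. In particular, any such g has determinant 1. (This makes precise the paper's description of the group of SL(4,ℂ) matrices commuting with j and fixing ṽ = e₁∧e₂+e₃∧e₄, ṽ∞ = i e₁∧e₂ − i e₃∧e₄, and e₁∧e₃ − e₂∧e₄.) -/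
open ComplexConjugate

/-- The quaternionic structure `j` on `ℂ⁴`. -/
def jq (x : Fin 4 → ℂ) : Fin 4 → ℂ :=
  ![-(conj (x 2)), -(conj (x 3)), conj (x 0), conj (x 1)]

/-!
The columns of a matrix commuting with `j` are `v, w, j v, j w`. Fixing `e₁ ∧ e₂` forces `v` and
`w` into the span of `e₁, e₂`, so the matrix is `diag(A, conj A)` with `A` of size two and
`det A = 1`. The coefficients of the third 2-vector are then the entries of `A * diag(1, -1) * Aᴴ`,
so fixing it means that `A` lies in `SU(1,1)`, which is the stated form.
-/

open Matrix

section Wedge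

open ExteriorAlgebra

variable {R M : Type*} [CommRing R] [AddCommGroup M] [Module R M]

/-- The linear functional `φ ∧ ψ` on the exterior algebra, as two successive contractions followed
by the projection to scalars; it reads off minors from a product of two vectors. -/
noncomputable def wedgePairing (φ ψ : Module.Dual R M) : ExteriorAlgebra R M →ₗ[R] R :=
  algebraMapInv.toLinearMap ∘ₗ CliffordAlgebra.contractLeft ψ ∘ₗ CliffordAlgebra.contractLeft φ

theorem wedgePairing_ι_mul_ι (φ ψ : Module.Dual R M) (u v : M) :
    wedgePairing φ ψ (ι R u * ι R v) = φ u * ψ v - φ v * ψ u := by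
  have contract : CliffordAlgebra.contractLeft ψ
      (CliffordAlgebra.contractLeft φ (ι R u * ι R v)) =
        algebraMap R (ExteriorAlgebra R M) (φ u * ψ v - φ v * ψ u) := by
    rw [CliffordAlgebra.contractLeft_ι_mul, CliffordAlgebra.contractLeft_ι, map_sub, map_smul,
      CliffordAlgebra.contractLeft_ι, CliffordAlgebra.contractLeft_mul_algebraMap,
      CliffordAlgebra.contractLeft_ι, Algebra.smul_def, mul_comm (φ v)]
    simp only [map_sub, map_mul]
  simp only [wedgePairing, LinearMap.comp_apply, contract]
  exact algebraMap_leftInverse M _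

theorem dual_eq_zero_of_ι_mul_ι_eq {u v x y : M} (h : ι R u * ι R v = ι R x * ι R y)
    {φ ψ : Module.Dual R M} (hxy : wedgePairing φ ψ (ι R x * ι R y) = 1)
    {χ : Module.Dual R M} (hx : χ x = 0) (hy : χ y = 0) : χ u = 0 ∧ χ v = 0 := by
  have hφψ : φ u * ψ v - φ v * ψ u = 1 := by rw [← wedgePairing_ι_mul_ι, h, hxy]
  have hχ (θ : Module.Dual R M) : χ u * θ v - χ v * θ u = 0 := by
    rw [← wedgePairing_ι_mul_ι, h, wedgePairing_ι_mul_ι, hx, hy]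
    ring
  constructor
  · linear_combination (-χ u) * hφψ + φ u * hχ ψ - ψ u * hχ φ
  · linear_combination (-χ v) * hφψ + φ v * hχ ψ - ψ v * hχ φ

theorem ι_smul_add_smul_mul_ι_smul_add_smul (a b c d : R) (u v : M) :
    ι R (a • u + b • v) * ι R (c • u + d • v) = (a * d - b * c) • (ι R u * ι R v) := by
  have swap : ι R v * ι R u = -(ι R u * ι R v) :=
    eq_neg_of_add_eq_zero_left (ι_add_mul_swap v u)
  simp only [map_add, map_smul, add_mul, mul_add, smul_mul_assoc, mul_smul_comm, ι_sq_zero, swap]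
  module

end Wedge

section Stabilizer

variable {R : Type*} [CommRing R]

theorem row_unique_of_det_eq_one {a b c d c' d' : R} (h : a * d - b * c = 1)
    (h' : a * d' - b * c' = 1) (hparallel : c * d' - d * c' = 0) : c = c' ∧ d = d' := by
  constructor
  · linear_combination c' * h - c * h' + a * hparallel
  · linear_combination d' * h - d * h' + b * hparallel

variable [StarRing R]

/-- The quaternionic structure `j` on `R⁴`, for any commutative ring with involution. -/
def quaternionicJ (x : Fin 4 → R) : Fin 4 → R :=
  ![-conj (x 2), -conj (x 3), conj (x 0), conj (x 1)]

/-- The image of `A = !![a, b; conj b, conj a]` under the embedding `A ↦ diag(A, conj A)`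
of `2 × 2` matrices; for `a * conj a - b * conj b = 1` such `A` form `SU(1,1)`. -/
def su11Matrix (a b : R) : Matrix (Fin 4) (Fin 4) R :=
  !![a, b, 0, 0;
     conj b, conj a, 0, 0;
     0, 0, conj a, conj b;
     0, 0, b, a]

local notation "𝐞[" i "]" => (Pi.single (i : Fin 4) 1 : Fin 4 → R)

local notation "ι" => ExteriorAlgebra.ι R (M := Fin 4 → R)

theorem commutes_quaternionicJ_iff (g : Matrix (Fin 4) (Fin 4) R) :
    (∀ x, g *ᵥ quaternionicJ x = quaternionicJ (g *ᵥ x)) ↔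
      g = !![g 0 0, g 0 1, -conj (g 2 0), -conj (g 2 1);
             g 1 0, g 1 1, -conj (g 3 0), -conj (g 3 1);
             g 2 0, g 2 1, conj (g 0 0), conj (g 0 1);
             g 3 0, g 3 1, conj (g 1 0), conj (g 1 1)] := by
  constructor
  · intro hj
    have quaternionicJ_single_zero : quaternionicJ 𝐞[0] = 𝐞[2] := by
      ext i; fin_cases i <;> simp [quaternionicJ]
    have quaternionicJ_single_one : quaternionicJ 𝐞[1] = 𝐞[3] := by
      ext i; fin_cases i <;> simp [quaternionicJ]
    have col_two : g.col 2 = quaternionicJ (g.col 0) := by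
      simpa only [quaternionicJ_single_zero, mulVec_single_one] using hj 𝐞[0]
    have col_three : g.col 3 = quaternionicJ (g.col 1) := by
      simpa only [quaternionicJ_single_one, mulVec_single_one] using hj 𝐞[1]
    ext i k
    fin_cases k
    · fin_cases i <;> rfl
    · fin_cases i <;> rfl
    · refine (congrFun col_two i).trans ?_
      fin_cases i <;> rfl
    · refine (congrFun col_three i).trans ?_
      fin_cases i <;> rfl
  · intro hg x
    rw [hg]
    ext i
    fin_cases i <;>
    · simp only [quaternionicJ, mulVec, dotProduct, Fin.sum_univ_four, Fin.reduceFinMk,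
        Fin.zero_eta, Fin.mk_one, of_apply, cons_val, map_add, map_mul, map_neg,
        starRingEnd_self_apply]
      ring

theorem exists_eq_su11Matrix {g : Matrix (Fin 4) (Fin 4) R}
    (hj : ∀ x, g *ᵥ quaternionicJ x = quaternionicJ (g *ᵥ x))
    (h₀₁ : ι (g *ᵥ 𝐞[0]) * ι (g *ᵥ 𝐞[1]) = ι 𝐞[0] * ι 𝐞[1])
    (h₀₂ : ι (g *ᵥ 𝐞[0]) * ι (g *ᵥ 𝐞[2]) - ι (g *ᵥ 𝐞[1]) * ι (g *ᵥ 𝐞[3]) =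
      ι 𝐞[0] * ι 𝐞[2] - ι 𝐞[1] * ι 𝐞[3]) :
    ∃ a b : R, a * conj a - b * conj b = 1 ∧ g = su11Matrix a b := by
  let minor (p q : Fin 4) : ExteriorAlgebra R (Fin 4 → R) →ₗ[R] R :=
    wedgePairing (LinearMap.proj p) (LinearMap.proj q)
  have hg := (commutes_quaternionicJ_iff g).1 hj
  have lower_left {k : Fin 4} (hk₀ : k ≠ 0) (hk₁ : k ≠ 1) : g k 0 = 0 ∧ g k 1 = 0 := by
    have hminor : minor 0 1 (ι 𝐞[0] * ι 𝐞[1]) = 1 := by simp [minor, wedgePairing_ι_mul_ι]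
    simpa using dual_eq_zero_of_ι_mul_ι_eq h₀₁ hminor
      (χ := LinearMap.proj k) (by simp [hk₀]) (by simp [hk₁])
  obtain ⟨h20, h21⟩ := lower_left (k := 2) (by decide) (by decide)
  obtain ⟨h30, h31⟩ := lower_left (k := 3) (by decide) (by decide)
  have h22 : g 2 2 = conj (g 0 0) := congrFun₂ hg 2 2
  have h23 : g 2 3 = conj (g 0 1) := congrFun₂ hg 2 3
  have hdet : g 0 0 * g 1 1 - g 0 1 * g 1 0 = 1 := by
    simpa [minor, wedgePairing_ι_mul_ι] using congrArg (minor 0 1) h₀₁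
  have hnorm : g 0 0 * conj (g 0 0) - g 0 1 * conj (g 0 1) = 1 := by
    simpa [minor, wedgePairing_ι_mul_ι, h20, h21, h22, h23] using congrArg (minor 0 2) h₀₂
  have horth : g 1 0 * conj (g 0 0) - g 1 1 * conj (g 0 1) = 0 := by
    simpa [minor, wedgePairing_ι_mul_ι, h20, h21, h22, h23] using congrArg (minor 1 2) h₀₂
  obtain ⟨h10, h11⟩ := row_unique_of_det_eq_one hdet hnorm horth
  refine ⟨g 0 0, g 0 1, hnorm, hg.trans ?_⟩
  simp [su11Matrix, h10, h11, h20, h21, h30, h31]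

theorem su11Matrix_mulVec_quaternionicJ (a b : R) (x : Fin 4 → R) :
    su11Matrix a b *ᵥ quaternionicJ x = quaternionicJ (su11Matrix a b *ᵥ x) :=
  (commutes_quaternionicJ_iff _).2 (by simp [su11Matrix]) x

theorem su11Matrix_eq_reindex_fromBlocks (a b : R) :
    su11Matrix a b = reindex finSumFinEquiv finSumFinEquiv
      (fromBlocks !![a, b; conj b, conj a] 0 0 !![conj a, conj b; b, a]) := by
  ext i k
  fin_cases i <;> fin_cases k <;> rfl

theorem det_su11Matrix (a b : R) :
    (su11Matrix a b).det = (a * conj a - b * conj b) ^ 2 := by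
  rw [su11Matrix_eq_reindex_fromBlocks, det_reindex_self, det_fromBlocks_zero₂₁,
    det_fin_two_of, det_fin_two_of]
  ring

theorem su11Matrix_mulVec_single_zero (a b : R) :
    su11Matrix a b *ᵥ 𝐞[0] = a • 𝐞[0] + conj b • 𝐞[1] := by
  ext i; fin_cases i <;> simp [su11Matrix]

theorem su11Matrix_mulVec_single_one (a b : R) :
    su11Matrix a b *ᵥ 𝐞[1] = b • 𝐞[0] + conj a • 𝐞[1] := by
  ext i; fin_cases i <;> simp [su11Matrix]

theorem su11Matrix_mulVec_single_two (a b : R) :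
    su11Matrix a b *ᵥ 𝐞[2] = conj a • 𝐞[2] + b • 𝐞[3] := by
  ext i; fin_cases i <;> simp [su11Matrix]

theorem su11Matrix_mulVec_single_three (a b : R) :
    su11Matrix a b *ᵥ 𝐞[3] = conj b • 𝐞[2] + a • 𝐞[3] := by
  ext i; fin_cases i <;> simp [su11Matrix]

theorem su11Matrix_wedge_zero_one (a b : R) :
    ι (su11Matrix a b *ᵥ 𝐞[0]) * ι (su11Matrix a b *ᵥ 𝐞[1]) =
      (a * conj a - b * conj b) • (ι 𝐞[0] * ι 𝐞[1]) := by
  rw [su11Matrix_mulVec_single_zero, su11Matrix_mulVec_single_one,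
    ι_smul_add_smul_mul_ι_smul_add_smul, mul_comm (conj b)]

theorem su11Matrix_wedge_two_three (a b : R) :
    ι (su11Matrix a b *ᵥ 𝐞[2]) * ι (su11Matrix a b *ᵥ 𝐞[3]) =
      (a * conj a - b * conj b) • (ι 𝐞[2] * ι 𝐞[3]) := by
  rw [su11Matrix_mulVec_single_two, su11Matrix_mulVec_single_three,
    ι_smul_add_smul_mul_ι_smul_add_smul, mul_comm (conj a)]

theorem su11Matrix_wedge_zero_two_sub_wedge_one_three (a b : R) :
    ι (su11Matrix a b *ᵥ 𝐞[0]) * ι (su11Matrix a b *ᵥ 𝐞[2]) -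
        ι (su11Matrix a b *ᵥ 𝐞[1]) * ι (su11Matrix a b *ᵥ 𝐞[3]) =
      (a * conj a - b * conj b) • (ι 𝐞[0] * ι 𝐞[2] - ι 𝐞[1] * ι 𝐞[3]) := by
  simp only [su11Matrix_mulVec_single_zero, su11Matrix_mulVec_single_one,
    su11Matrix_mulVec_single_two, su11Matrix_mulVec_single_three, map_add, map_smul, add_mul,
    mul_add, smul_mul_assoc, mul_smul_comm]
  module

theorem stabilizer_description_general (g : Matrix (Fin 4) (Fin 4) R) :
    (((∀ x, g *ᵥ quaternionicJ x = quaternionicJ (g *ᵥ x)) ∧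
        ι (g *ᵥ 𝐞[0]) * ι (g *ᵥ 𝐞[1]) = ι 𝐞[0] * ι 𝐞[1] ∧
        ι (g *ᵥ 𝐞[2]) * ι (g *ᵥ 𝐞[3]) = ι 𝐞[2] * ι 𝐞[3] ∧
        ι (g *ᵥ 𝐞[0]) * ι (g *ᵥ 𝐞[2]) - ι (g *ᵥ 𝐞[1]) * ι (g *ᵥ 𝐞[3]) =
          ι 𝐞[0] * ι 𝐞[2] - ι 𝐞[1] * ι 𝐞[3]) ↔
      ∃ a b : R, a * conj a - b * conj b = 1 ∧ g = su11Matrix a b) ∧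
    (((∀ x, g *ᵥ quaternionicJ x = quaternionicJ (g *ᵥ x)) ∧
        ι (g *ᵥ 𝐞[0]) * ι (g *ᵥ 𝐞[1]) = ι 𝐞[0] * ι 𝐞[1] ∧
        ι (g *ᵥ 𝐞[2]) * ι (g *ᵥ 𝐞[3]) = ι 𝐞[2] * ι 𝐞[3] ∧
        ι (g *ᵥ 𝐞[0]) * ι (g *ᵥ 𝐞[2]) - ι (g *ᵥ 𝐞[1]) * ι (g *ᵥ 𝐞[3]) =
          ι 𝐞[0] * ι 𝐞[2] - ι 𝐞[1] * ι 𝐞[3]) →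
      g.det = 1) := by
  refine ⟨⟨fun ⟨hj, h₀₁, _, h₀₂⟩ ↦ exists_eq_su11Matrix hj h₀₁ h₀₂, ?_⟩, ?_⟩
  · rintro ⟨a, b, hab, rfl⟩
    refine ⟨su11Matrix_mulVec_quaternionicJ a b, ?_, ?_, ?_⟩
    · rw [su11Matrix_wedge_zero_one, hab, one_smul]
    · rw [su11Matrix_wedge_two_three, hab, one_smul]
    · rw [su11Matrix_wedge_zero_two_sub_wedge_one_three, hab, one_smul]
  · rintro ⟨hj, h₀₁, _, h₀₂⟩
    obtain ⟨a, b, hab, rfl⟩ := exists_eq_su11Matrix hj h₀₁ h₀₂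
    rw [det_su11Matrix, hab, one_pow]

end Stabilizer

/-- The matrices commuting with `j` whose induced action on 2-vectors fixes `e₁∧e₂`,
`e₃∧e₄` (equivalently `ṽ` and `ṽ∞`) and `e₁∧e₃ − e₂∧e₄` are exactly the matrices
`[[a, b, 0, 0], [conj b, conj a, 0, 0], [0, 0, conj a, conj b], [0, 0, b, a]]` with
`a·conj a − b·conj b = 1`; in particular all of them have determinant 1. -/
theorem stabilizer_description (g : Matrix (Fin 4) (Fin 4) ℂ) :
    (((∀ x : Fin 4 → ℂ, g.mulVec (jq x) = jq (g.mulVec x)) ∧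
        ι4 (g.mulVec (e 0)) * ι4 (g.mulVec (e 1)) = ι4 (e 0) * ι4 (e 1) ∧
        ι4 (g.mulVec (e 2)) * ι4 (g.mulVec (e 3)) = ι4 (e 2) * ι4 (e 3) ∧
        ι4 (g.mulVec (e 0)) * ι4 (g.mulVec (e 2)) - ι4 (g.mulVec (e 1)) * ι4 (g.mulVec (e 3))
          = ι4 (e 0) * ι4 (e 2) - ι4 (e 1) * ι4 (e 3)) ↔
      (∃ a b : ℂ, a * conj a - b * conj b = 1 ∧
        g = !![a, b, 0, 0;
               conj b, conj a, 0, 0;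
               0, 0, conj a, conj b;
               0, 0, b, a])) ∧
    (((∀ x : Fin 4 → ℂ, g.mulVec (jq x) = jq (g.mulVec x)) ∧
        ι4 (g.mulVec (e 0)) * ι4 (g.mulVec (e 1)) = ι4 (e 0) * ι4 (e 1) ∧
        ι4 (g.mulVec (e 2)) * ι4 (g.mulVec (e 3)) = ι4 (e 2) * ι4 (e 3) ∧
        ι4 (g.mulVec (e 0)) * ι4 (g.mulVec (e 2)) - ι4 (g.mulVec (e 1)) * ι4 (g.mulVec (e 3))
          = ι4 (e 0) * ι4 (e 2) - ι4 (e 1) * ι4 (e 3)) →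
      g.det = 1) :=
  stabilizer_description_general g
end
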